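/- Let L, T, τ > 0 and let f : ℝ → ℝ be continuously differentiable. Let q₀, q₁, q₂, q₃, q₄ : [0,T] × ℝ → ℝ be C¹ functions, L-periodic in x, satisfying ∂_t q₀ + ∂_x f(q₀) − ∂_x q₄ = 0, τ ∂_t q₁ − ∂_x q₁ + ∂_x q₃ = q₄, τ ∂_t q₂ − ∂_x q₂ = −q₃, τ ∂_t q₃ + ∂_x q₁ = q₂, and τ ∂_t q₄ − ∂_x q₀ = −q₁ on [0,T] × ℝ. Then the energy t ↦ η(q)(t) = ∫₀^L ( ½ q₀(t,x)² + (τ/2) Σ_{i=1}^{4} q_i(t,x)² ) dx is constant on [0,T]. -/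

import Mathlib

open MeasureTheory

/-- Partial derivative with respect to the first (time) variable. -/
noncomputable def pdt (u : ℝ → ℝ → ℝ) : ℝ → ℝ → ℝ :=
  fun t x => deriv (fun s => u s x) t

/-- Partial derivative with respect to the second (space) variable. -/
noncomputable def pdx (u : ℝ → ℝ → ℝ) : ℝ → ℝ → ℝ :=
  fun t x => deriv (fun y => u t y) x

/-- The time partial derivative of a `C¹` function of two variables. -/
lemma hasDerivAt_pdt {u : ℝ → ℝ → ℝ} (hu : ContDiff ℝ 1 (Function.uncurry u)) (t x : ℝ) :
    HasDerivAt (fun s => u s x) (pdt u t x) t := by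
  have h : ContDiff ℝ 1 (fun s => Function.uncurry u (s, x)) := by fun_prop
  exact (h.differentiable one_ne_zero t).hasDerivAt

/-- The space partial derivative of a `C¹` function of two variables. -/
lemma hasDerivAt_pdx {u : ℝ → ℝ → ℝ} (hu : ContDiff ℝ 1 (Function.uncurry u)) (t x : ℝ) :
    HasDerivAt (fun y => u t y) (pdx u t x) x := by
  have h : ContDiff ℝ 1 (fun y => Function.uncurry u (t, y)) := by fun_prop
  exact (h.differentiable one_ne_zero x).hasDerivAt

/-- The time partial derivative of a `C¹` function is jointly continuous. -/
lemma continuous_uncurry_pdt {u : ℝ → ℝ → ℝ} (hu : ContDiff ℝ 1 (Function.uncurry u)) :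
    Continuous (Function.uncurry (pdt u)) := by
  have h : Function.uncurry (pdt u) = fun p => fderiv ℝ (Function.uncurry u) p (1, 0) := by
    ext ⟨t, x⟩
    have h₁ := (hu.differentiable one_ne_zero (t, x)).hasFDerivAt
    have h₂ : HasDerivAt (fun s : ℝ => (s, x)) ((1 : ℝ), (0 : ℝ)) t :=
      (hasDerivAt_id t).prodMk (hasDerivAt_const t x)
    exact (h₁.comp_hasDerivAt t h₂).deriv
  rw [h]
  exact (hu.continuous_fderiv one_ne_zero).clm_apply continuous_const

/-- A `C¹` density `e` obeying the local conservation law `∂_t e = ∂_x g`, with a flux `g` taking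
equal values at both ends of the interval `[a, b]`, has constant integral over `[a, b]`. -/
lemma integral_eq_of_local_conservation {a b T : ℝ} {e g : ℝ → ℝ → ℝ}
    (he : ContDiff ℝ 1 (Function.uncurry e))
    (hg : ∀ t ∈ Set.Icc (0 : ℝ) T, ∀ x, HasDerivAt (g t) (pdt e t x) x)
    (hab : ∀ t ∈ Set.Icc (0 : ℝ) T, g t b = g t a) {t : ℝ} (ht : t ∈ Set.Icc (0 : ℝ) T) :
    ∫ x in a..b, e t x = ∫ x in a..b, e 0 x := by
  have hcont := continuous_uncurry_pdt he
  have hx (s : ℝ) : Continuous (pdt e s) := hcont.comp (Continuous.prodMk_right s)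
  have hs (x : ℝ) : Continuous (fun s => pdt e s x) := hcont.comp (Continuous.prodMk_left x)
  have hex (s : ℝ) : Continuous (e s) := he.continuous.comp (Continuous.prodMk_right s)
  rw [← sub_eq_zero, ← intervalIntegral.integral_sub ((hex t).intervalIntegrable _ _)
    ((hex 0).intervalIntegrable _ _)]
  calc ∫ x in a..b, (e t x - e 0 x)
      = ∫ x in a..b, ∫ s in (0 : ℝ)..t, pdt e s x := by
        refine intervalIntegral.integral_congr fun x _ => ?_
        exact (intervalIntegral.integral_eq_sub_of_hasDerivAt
          (fun s _ => hasDerivAt_pdt he s x) ((hs x).intervalIntegrable _ _)).symm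
    _ = ∫ s in (0 : ℝ)..t, ∫ x in a..b, pdt e s x := by
        refine intervalIntegral_intervalIntegral_swap ?_
        have hswap : Continuous (Function.uncurry fun x s => pdt e s x) :=
          hcont.comp continuous_swap
        exact (hswap.continuousOn.integrableOn_compact
          (isCompact_uIcc.prod isCompact_uIcc)).mono_set
          (Set.prod_mono Set.uIoc_subset_uIcc Set.uIoc_subset_uIcc)
    _ = ∫ s in (0 : ℝ)..t, (0 : ℝ) := by
        refine intervalIntegral.integral_congr fun s hst => ?_
        rw [Set.uIcc_of_le ht.1] at hst
        have hsT : s ∈ Set.Icc (0 : ℝ) T := ⟨hst.1, hst.2.trans ht.2⟩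
        rw [intervalIntegral.integral_eq_sub_of_hasDerivAt (fun x _ => hg s hsT x)
          ((hx s).intervalIntegrable _ _), hab s hsT, sub_self]
    _ = 0 := by simp

/-- Energy conservation for the energy-consistent hyperbolic approximation of the
Kawahara-type equation `∂_t u + ∂_x f(u) + ∂_x³ u - ∂_x⁵ u = 0`. -/
theorem kawahara_hyperbolic_energy_conservation
    (L T τ : ℝ) (hL : 0 < L) (hT : 0 < T) (hτ : 0 < τ)
    (f : ℝ → ℝ) (hf : ContDiff ℝ 1 f)
    (q₀ q₁ q₂ q₃ q₄ : ℝ → ℝ → ℝ)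
    (hq₀ : ContDiff ℝ 1 (Function.uncurry q₀))
    (hq₁ : ContDiff ℝ 1 (Function.uncurry q₁))
    (hq₂ : ContDiff ℝ 1 (Function.uncurry q₂))
    (hq₃ : ContDiff ℝ 1 (Function.uncurry q₃))
    (hq₄ : ContDiff ℝ 1 (Function.uncurry q₄))
    (hper₀ : ∀ t, Function.Periodic (q₀ t) L)
    (hper₁ : ∀ t, Function.Periodic (q₁ t) L)
    (hper₂ : ∀ t, Function.Periodic (q₂ t) L)
    (hper₃ : ∀ t, Function.Periodic (q₃ t) L)
    (hper₄ : ∀ t, Function.Periodic (q₄ t) L)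
    (heq₀ : ∀ t ∈ Set.Icc (0:ℝ) T, ∀ x : ℝ,
      pdt q₀ t x + pdx (fun s y => f (q₀ s y)) t x - pdx q₄ t x = 0)
    (heq₁ : ∀ t ∈ Set.Icc (0:ℝ) T, ∀ x : ℝ,
      τ * pdt q₁ t x - pdx q₁ t x + pdx q₃ t x = q₄ t x)
    (heq₂ : ∀ t ∈ Set.Icc (0:ℝ) T, ∀ x : ℝ,
      τ * pdt q₂ t x - pdx q₂ t x = - q₃ t x)
    (heq₃ : ∀ t ∈ Set.Icc (0:ℝ) T, ∀ x : ℝ,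
      τ * pdt q₃ t x + pdx q₁ t x = q₂ t x)
    (heq₄ : ∀ t ∈ Set.Icc (0:ℝ) T, ∀ x : ℝ,
      τ * pdt q₄ t x - pdx q₀ t x = - q₁ t x) :
    ∀ t ∈ Set.Icc (0:ℝ) T,
      (∫ x in (0:ℝ)..L,
        (q₀ t x ^ 2 / 2
          + τ / 2 * (q₁ t x ^ 2 + q₂ t x ^ 2 + q₃ t x ^ 2 + q₄ t x ^ 2)))
      = ∫ x in (0:ℝ)..L,
        (q₀ 0 x ^ 2 / 2
          + τ / 2 * (q₁ 0 x ^ 2 + q₂ 0 x ^ 2 + q₃ 0 x ^ 2 + q₄ 0 x ^ 2)) := by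
  have he : ContDiff ℝ 1 (Function.uncurry fun t x => q₀ t x ^ 2 / 2
      + τ / 2 * (q₁ t x ^ 2 + q₂ t x ^ 2 + q₃ t x ^ 2 + q₄ t x ^ 2)) := by
    simp only [Function.uncurry_def] at *
    fun_prop
  intro t ht
  refine integral_eq_of_local_conservation (g := fun t x => q₀ t x * q₄ t x - q₀ t x * f (q₀ t x)
    + (∫ y in (0 : ℝ)..q₀ t x, f y) + q₁ t x ^ 2 / 2 - q₁ t x * q₃ t x + q₂ t x ^ 2 / 2)
    he (fun t ht x => ?_) (fun t _ => ?_) ht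
  · have d₀ := hasDerivAt_pdx hq₀ t x
    have d₁ := hasDerivAt_pdx hq₁ t x
    have d₂ := hasDerivAt_pdx hq₂ t x
    have d₃ := hasDerivAt_pdx hq₃ t x
    have d₄ := hasDerivAt_pdx hq₄ t x
    have df : HasDerivAt (fun y => f (q₀ t y)) (deriv f (q₀ t x) * pdx q₀ t x) x :=
      (hf.differentiable one_ne_zero (q₀ t x)).hasDerivAt.comp x d₀
    have dF : HasDerivAt (fun y => ∫ z in (0 : ℝ)..q₀ t y, f z) (f (q₀ t x) * pdx q₀ t x) x :=
      (hf.continuous.integral_hasStrictDerivAt 0 (q₀ t x)).hasDerivAt.comp x d₀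
    have hfx : pdx (fun s y => f (q₀ s y)) t x = deriv f (q₀ t x) * pdx q₀ t x := df.deriv
    have hflux := (((((d₀.mul d₄).sub (d₀.mul df)).add dF).add ((d₁.pow 2).div_const 2)).sub
      (d₁.mul d₃)).add ((d₂.pow 2).div_const 2)
    have henergy := (((hasDerivAt_pdt hq₀ t x).pow 2).div_const 2).add
      ((((((hasDerivAt_pdt hq₁ t x).pow 2).add ((hasDerivAt_pdt hq₂ t x).pow 2)).add
        ((hasDerivAt_pdt hq₃ t x).pow 2)).add ((hasDerivAt_pdt hq₄ t x).pow 2)).const_mul (τ / 2))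
    refine hflux.congr_deriv (Eq.trans ?_ henergy.deriv.symm)
    have e₀ := heq₀ t ht x
    rw [hfx] at e₀
    norm_num
    linear_combination -q₀ t x * e₀ - q₁ t x * heq₁ t ht x - q₂ t x * heq₂ t ht x
      - q₃ t x * heq₃ t ht x - q₄ t x * heq₄ t ht x
  · have endpoint {u : ℝ → ℝ} (hu : Function.Periodic u L) : u L = u 0 := by
      simpa using hu 0
    simp only [endpoint (hper₀ t), endpoint (hper₁ t), endpoint (hper₂ t), endpoint (hper₃ t),
      endpoint (hper₄ t)]
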